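/- Let q be a prime power and let ν, m₁, m₂, t be positive integers with m₁ ≥ t+1, m₂ ≥ t+1, and 2ν ≥ m₁ + m₂ + 1 + max{m₁ + t + 2, m₂}. Suppose ℱ₁ ⊆ 𝒫_{m₁} and ℱ₂ ⊆ 𝒫_{m₂} are nonempty non-trivial cross t-intersecting families with τ_t(ℱ₂) ≥ τ_t(ℱ₁) and (τ_t(ℱ₁), τ_t(ℱ₂)) ≠ (t, t+1). Then |ℱ₁|·|ℱ₂| < c₁(ν,m₁,m₂,t). -/

import Mathlib

open Finset Module

noncomputable section

/-- Gaussian binomial coefficient `[n choose k]_q` as a rational number. -/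
def gaussBinom (q n k : ℕ) : ℚ :=
  ∏ i ∈ Finset.range k, ((q : ℚ) ^ ((n : ℤ) - i) - 1) / ((q : ℚ) ^ ((k : ℤ) - i) - 1)

/-- `N'(a; m; 2ν)`, the number of `m`-dim totally isotropic subspaces containing
a fixed `a`-dim one. -/
def Nprime (q a m ν : ℕ) : ℚ :=
  ∏ i ∈ Finset.Icc 1 (m - a), ((q : ℚ) ^ (2 * ((ν : ℤ) - m + i)) - 1) / ((q : ℚ) ^ (i : ℤ) - 1)

variable {K V : Type*} [Field K] [AddCommGroup V] [Module K V]

/-- A subspace is totally isotropic w.r.t. the bilinear form `f`. -/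
def TotallyIsotropic (f : V →ₗ[K] V →ₗ[K] K) (W : Submodule K V) : Prop :=
  ∀ x ∈ W, ∀ y ∈ W, f x y = 0

/-- `polar f m` = `𝒫_m`, the set of `m`-dimensional totally isotropic subspaces. -/
def polar (f : V →ₗ[K] V →ₗ[K] K) (m : ℕ) : Set (Submodule K V) :=
  {W | TotallyIsotropic f W ∧ finrank K W = m}

/-- `X` is a `t`-cover of the family `ℱ`. -/
def IsTCover (f : V →ₗ[K] V →ₗ[K] K) (t : ℕ) (ℱ : Set (Submodule K V))
    (X : Submodule K V) : Prop :=
  TotallyIsotropic f X ∧ ∀ F ∈ ℱ, t ≤ finrank K ↥(X ⊓ F)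

/-- `τ_t(ℱ)`, the minimum dimension of a `t`-cover of `ℱ`. -/
def tauCover (f : V →ₗ[K] V →ₗ[K] K) (t : ℕ) (ℱ : Set (Submodule K V)) : ℕ :=
  sInf {x | ∃ X, IsTCover f t ℱ X ∧ finrank K ↥X = x}

def C1 (f : V →ₗ[K] V →ₗ[K] K) (M T : Submodule K V) (m t : ℕ) : Set (Submodule K V) :=
  {F | F ∈ polar f m ∧ T ≤ F ∧ t + 1 ≤ finrank K ↥(F ⊓ M)}

def C2 (f : V →ₗ[K] V →ₗ[K] K) (M T : Submodule K V) (m : ℕ) : Set (Submodule K V) :=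
  {F | F ∈ polar f m ∧ T ≤ F} ∪ {F | F ∈ polar f m ∧ F ≤ M}

def C3 (f : V →ₗ[K] V →ₗ[K] K) (S : Submodule K V) (m : ℕ) : Set (Submodule K V) :=
  {F | F ∈ polar f m ∧ S ≤ F}

def C4 (f : V →ₗ[K] V →ₗ[K] K) (S : Submodule K V) (m t : ℕ) : Set (Submodule K V) :=
  {F | F ∈ polar f m ∧ t ≤ finrank K ↥(F ⊓ S)}

def s0 (q ν m s t : ℕ) : ℚ :=
  gaussBinom q (s - t) 1 * Nprime q (t + 1) m ν - q * gaussBinom q (s - t) 2 * Nprime q (t + 2) m ν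

/-!
Let `N m a` be the number of `m`-dimensional totally isotropic subspaces through a given
`a`-dimensional one. In the stated range each increase of `a` by one divides `N m a` by a large
power of `q`. If `dim S < τ_t(ℱ₂)`, some `H ∈ ℱ₂` meets `S` in dimension less than `t`, and the
members of `ℱ₁` through `S` are distributed among at most `q ^ (m₂ + 1 - t)` subspaces `S + ⟨w⟩`
with `w ∈ H`. Iterating up to dimension `τ_t(ℱ₂)`, starting from the `t`-subspaces of a minimum
`t`-cover of `ℱ₁`, bounds `|ℱ₁|` in terms of both covering numbers; the same holds for `ℱ₂`, and
together the bounds give `|ℱ₁| |ℱ₂| ≤ q ^ (m₂ - t) * N m₁ (t + 1) * N m₂ t` unless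
`(τ_t(ℱ₁), τ_t(ℱ₂)) = (t, t + 1)`. Conversely, almost every `F ∈ 𝒞₁` meets `M` in dimension
exactly `t + 1`, so `|𝒞₁| > q ^ (m₂ - t) * N m₁ (t + 1)`, while `|𝒞₂| ≥ N m₂ t`.
-/

section DoubleCounting

theorem ncard_mul_le_ncard_mul {α β : Type*} {s : Set α} {t : Set β} (r : α → β → Prop) {a b : ℚ}
    (hs : ∀ x ∈ s, a ≤ {y ∈ t | r x y}.ncard) (ht : ∀ y ∈ t, ({x ∈ s | r x y}.ncard : ℚ) ≤ b)
    (hs_fin : s.Finite := by toFinite_tac) (ht_fin : t.Finite := by toFinite_tac) :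
    s.ncard * a ≤ t.ncard * b := by
  classical
  lift s to Finset α using hs_fin
  lift t to Finset β using ht_fin
  simp only [Finset.mem_coe, ← Finset.coe_bipartiteAbove, ← Finset.coe_bipartiteBelow,
    Set.ncard_coe_finset] at hs ht ⊢
  simpa only [nsmul_eq_mul] using Finset.card_nsmul_le_card_nsmul r hs ht

theorem ncard_mul_eq_ncard_mul {α β : Type*} {s : Set α} {t : Set β} (r : α → β → Prop) {a b : ℚ}
    (hs : ∀ x ∈ s, ({y ∈ t | r x y}.ncard : ℚ) = a) (ht : ∀ y ∈ t, ({x ∈ s | r x y}.ncard : ℚ) = b)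
    (hs_fin : s.Finite := by toFinite_tac) (ht_fin : t.Finite := by toFinite_tac) :
    s.ncard * a = t.ncard * b :=
  le_antisymm
    (ncard_mul_le_ncard_mul r (fun x hx => (hs x hx).ge) (fun y hy => (ht y hy).le) hs_fin ht_fin)
    (ncard_mul_le_ncard_mul (fun y x => r x y) (fun y hy => (ht y hy).ge)
      (fun x hx => (hs x hx).le) ht_fin hs_fin)

variable [Finite V]

theorem ncard_coe_submodule (W : Submodule K V) :
    (W : Set V).ncard = Nat.card K ^ finrank K W := by
  rw [← Nat.card_coe_set_eq]
  exact Module.natCard_eq_pow_finrank (K := K) (V := W)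

theorem ncard_submodule_sdiff {A B : Submodule K V} (h : A ≤ B) :
    (((B : Set V) \ A).ncard : ℚ) = (Nat.card K : ℚ) ^ finrank K B - Nat.card K ^ finrank K A := by
  have hsum := Set.ncard_sdiff_add_ncard_of_subset (SetLike.coe_subset_coe.2 h)
  rw [ncard_coe_submodule, ncard_coe_submodule] at hsum
  rw [eq_sub_iff_add_eq]
  exact_mod_cast hsum

theorem ncard_le_pow_finrank_mul_of_forall_exists {α : Type*} [Finite α] (W : Submodule K V)
    {s : Set α} (r : α → V → Prop) {B : ℚ} (hB : 0 ≤ B) (hex : ∀ a ∈ s, ∃ w ∈ W, w ≠ 0 ∧ r a w)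
    (hle : ∀ w ∈ W, w ≠ 0 → ({a ∈ s | r a w}.ncard : ℚ) ≤ B) :
    s.ncard ≤ (Nat.card K : ℚ) ^ finrank K W * B := by
  have hpos : ∀ a ∈ s, (1 : ℚ) ≤ {w ∈ (W : Set V) \ {0} | r a w}.ncard := by
    intro a ha
    obtain ⟨w, hw, hw0, haw⟩ := hex a ha
    have hne : {w ∈ (W : Set V) \ {0} | r a w}.Nonempty := ⟨w, ⟨hw, hw0⟩, haw⟩
    exact_mod_cast (Set.ncard_pos).2 hne
  calc (s.ncard : ℚ) = s.ncard * 1 := (mul_one _).symm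
    _ ≤ ((W : Set V) \ {0}).ncard * B :=
        ncard_mul_le_ncard_mul r hpos fun w hw => hle w hw.1 hw.2
    _ ≤ (W : Set V).ncard * B := by gcongr; exacts [Set.toFinite _, Set.sdiff_subset]
    _ = (Nat.card K : ℚ) ^ finrank K W * B := by rw [ncard_coe_submodule, Nat.cast_pow]

end DoubleCounting

section Subspaces

variable [FiniteDimensional K V]

theorem exists_le_finrank_eq (Y : Submodule K V) {k : ℕ} (hk : k ≤ finrank K Y) :
    ∃ W ≤ Y, finrank K W = k := by
  induction k with
  | zero => exact ⟨⊥, bot_le, finrank_bot K V⟩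
  | succ k ih =>
    obtain ⟨W, hWY, rfl⟩ := ih (by lia)
    have hYW : ¬ Y ≤ W := fun h => by
      have := Submodule.finrank_mono h
      lia
    obtain ⟨v, hvY, hvW⟩ := SetLike.not_le_iff_exists.1 hYW
    exact ⟨W ⊔ K ∙ v, sup_le hWY ((Submodule.span_singleton_le_iff_mem v Y).2 hvY),
      Submodule.finrank_sup_span_singleton hvW⟩

theorem exists_le_disjoint_finrank_eq (S H : Submodule K V) {k : ℕ}
    (hk : finrank K ↥(S ⊓ H) + k ≤ finrank K H) :
    ∃ W ≤ H, Disjoint S W ∧ finrank K W = k := by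
  obtain ⟨C, hdisj, hsup⟩ :=
    IsModularLattice.exists_disjoint_and_sup_eq (inf_le_right : S ⊓ H ≤ H)
  have hCH : C ≤ H := hsup ▸ le_sup_right
  have hdim := Submodule.finrank_sup_add_finrank_inf_eq (S ⊓ H) C
  rw [hsup, hdisj.eq_bot, finrank_bot] at hdim
  obtain ⟨W, hWC, hW⟩ := exists_le_finrank_eq C (k := k) (by lia)
  refine ⟨W, hWC.trans hCH, disjoint_iff_inf_le.2 ?_, hW⟩
  calc S ⊓ W ≤ (S ⊓ H) ⊓ C :=
        le_inf (inf_le_inf_left S (hWC.trans hCH)) (inf_le_right.trans hWC)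
    _ ≤ ⊥ := hdisj.le_bot

theorem exists_mem_inf_ne_zero {A B H : Submodule K V} (hA : A ≤ H) (hB : B ≤ H)
    (h : finrank K H < finrank K A + finrank K B) : ∃ v ∈ A ⊓ B, v ≠ 0 := by
  refine Submodule.exists_mem_ne_zero_of_ne_bot fun hbot => ?_
  have hdim := Submodule.finrank_sup_add_finrank_inf_eq A B
  have hle := Submodule.finrank_mono (sup_le hA hB)
  rw [hbot, finrank_bot] at hdim
  lia

theorem le_of_finrank_le_finrank_inf {X F : Submodule K V}
    (h : finrank K X ≤ finrank K ↥(X ⊓ F)) : X ≤ F :=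
  inf_eq_left.1 (Submodule.eq_of_le_of_finrank_le inf_le_left h)

theorem exists_dual_ne_zero_le_map_ker {S W Y : Submodule K V} (hS : S ≤ Y) (hW : W ≤ Y)
    (h : finrank K S + finrank K W < finrank K Y) :
    ∃ φ ∈ (W.submoduleOf Y).dualAnnihilator, φ ≠ 0 ∧ S ≤ (LinearMap.ker φ).map Y.subtype := by
  have hlt : S.submoduleOf Y ⊔ W.submoduleOf Y < ⊤ := by
    refine Submodule.lt_top_of_finrank_lt_finrank
      ((Submodule.finrank_add_le_finrank_add_finrank _ _).trans_lt ?_)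
    rwa [(Submodule.submoduleOfEquivOfLe hS).finrank_eq,
      (Submodule.submoduleOfEquivOfLe hW).finrank_eq]
  obtain ⟨φ, hφ0, hφ⟩ := Submodule.exists_le_ker_of_lt_top _ hlt
  refine ⟨φ, (Submodule.mem_dualAnnihilator φ).2 fun w hw => hφ (Submodule.mem_sup_right hw),
    hφ0, fun s hs => ⟨⟨s, hS hs⟩, hφ (Submodule.mem_sup_left hs), rfl⟩⟩

end Subspaces

section UnionBounds

variable [Finite V]

-- A subspace `W ≤ H` disjoint from `S` and of dimension `dim H + 1 - t` meets every `F ∩ H`.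
theorem ncard_superspaces_le_pow_mul {ℱ : Set (Submodule K V)} {S H : Submodule K V} {t : ℕ}
    {B : ℚ} (hB : 0 ≤ B) (hSH : finrank K ↥(S ⊓ H) < t)
    (hF : ∀ F ∈ ℱ, t ≤ finrank K ↥(F ⊓ H))
    (hle : ∀ S' : Submodule K V, finrank K S' = finrank K S + 1 →
      ({F ∈ ℱ | S' ≤ F}.ncard : ℚ) ≤ B) :
    ({F ∈ ℱ | S ≤ F}.ncard : ℚ) ≤ (Nat.card K : ℚ) ^ (finrank K H + 1 - t) * B := by
  have hSH' : finrank K ↥(S ⊓ H) ≤ finrank K H := Submodule.finrank_mono inf_le_right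
  obtain ⟨W, hWH, hSW, hW⟩ :=
    exists_le_disjoint_finrank_eq S H (k := finrank K H + 1 - t) (by lia)
  rw [← hW]
  refine ncard_le_pow_finrank_mul_of_forall_exists W (fun F w => w ∈ F) hB ?_ fun w hw hw0 => ?_
  · rintro F ⟨hFℱ, -⟩
    have hdim := hF F hFℱ
    obtain ⟨w, hw, hw0⟩ := exists_mem_inf_ne_zero (A := F ⊓ H) inf_le_right hWH (by lia)
    exact ⟨w, hw.2, hw0, hw.1.1⟩
  · have hwS : w ∉ S := fun hwS => hw0 (Submodule.disjoint_def.1 hSW w hwS hw)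
    convert hle (S ⊔ K ∙ w) (Submodule.finrank_sup_span_singleton hwS) using 4
    simp only [Set.mem_sep_iff, sup_le_iff, Submodule.span_singleton_le_iff_mem, and_assoc]

-- Fix `W ≤ Y` of dimension `x`: every `t`-dimensional subspace of `Y` lies in a hyperplane of `Y`
-- through `W`, and such hyperplanes are kernels of functionals from a space of dimension `t + 1`.
theorem ncard_finrank_inf_ge_le_pow_mul [Finite K] {ℱ : Set (Submodule K V)} {t : ℕ} {B : ℚ}
    (hB : 0 ≤ B)
    (hle : ∀ S : Submodule K V, finrank K S = t → ({F ∈ ℱ | S ≤ F}.ncard : ℚ) ≤ B)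
    (x : ℕ) {Y : Submodule K V} (hY : finrank K Y = t + x) :
    ({F ∈ ℱ | t ≤ finrank K ↥(Y ⊓ F)}.ncard : ℚ) ≤ (Nat.card K : ℚ) ^ ((t + 1) * x) * B := by
  induction x generalizing Y with
  | zero =>
    rw [mul_zero, pow_zero, one_mul]
    refine le_trans ?_ (hle Y hY)
    gcongr
    · exact Set.toFinite _
    · exact fun hdim => le_of_finrank_le_finrank_inf (hY.trans_le hdim)
  | succ x ih =>
    have : Finite (Dual K Y) := Module.finite_of_finite K
    obtain ⟨W, hWY, hW⟩ := exists_le_finrank_eq Y (k := x) (by lia)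
    have hΦ : finrank K (W.submoduleOf Y).dualAnnihilator = t + 1 := by
      have := Subspace.finrank_add_finrank_dualAnnihilator_eq (W.submoduleOf Y)
      rw [(Submodule.submoduleOfEquivOfLe hWY).finrank_eq] at this
      lia
    calc ({F ∈ ℱ | t ≤ finrank K ↥(Y ⊓ F)}.ncard : ℚ)
        ≤ (Nat.card K : ℚ) ^ finrank K (W.submoduleOf Y).dualAnnihilator *
            ((Nat.card K : ℚ) ^ ((t + 1) * x) * B) := by
          refine ncard_le_pow_finrank_mul_of_forall_exists _
            (fun F φ => t ≤ finrank K ↥((LinearMap.ker φ).map Y.subtype ⊓ F)) (by positivity)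
            (fun F hF => ?_) (fun φ _ hφ0 => ?_)
          · obtain ⟨S, hS, rfl⟩ := exists_le_finrank_eq (Y ⊓ F) hF.2
            obtain ⟨φ, hφ, hφ0, hSφ⟩ :=
              exists_dual_ne_zero_le_map_ker (hS.trans inf_le_left) hWY (by lia)
            exact ⟨φ, hφ, hφ0, Submodule.finrank_mono (le_inf hSφ (hS.trans inf_le_right))⟩
          · have hker := Module.Dual.finrank_ker_add_one_of_ne_zero hφ0
            refine le_trans ?_
              (ih (Y := (LinearMap.ker φ).map Y.subtype)
                (by rw [Submodule.finrank_map_subtype_eq]; lia))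
            gcongr
            exacts [Set.toFinite _, fun F hF => hF.1]
      _ = (Nat.card K : ℚ) ^ ((t + 1) * (x + 1)) * B := by rw [hΦ]; ring

end UnionBounds

section TotallyIsotropic

variable {f : V →ₗ[K] V →ₗ[K] K} {A B : Submodule K V}

theorem TotallyIsotropic.mono (hB : TotallyIsotropic f B) (h : A ≤ B) : TotallyIsotropic f A :=
  fun x hx y hy => hB x (h hx) y (h hy)

theorem TotallyIsotropic.le_orthogonal (hA : TotallyIsotropic f A) :
    A ≤ LinearMap.BilinForm.orthogonal f A :=
  fun x hx y hy => hA y hy x hx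

theorem TotallyIsotropic.sup_span_singleton (halt : f.IsAlt) (hA : TotallyIsotropic f A) {v : V}
    (hv : v ∈ LinearMap.BilinForm.orthogonal f A) : TotallyIsotropic f (A ⊔ K ∙ v) := by
  have hAv : ∀ a ∈ A, f a v = 0 := hv
  have hvA : ∀ a ∈ A, f v a = 0 := fun a ha => halt.isRefl a v (hAv a ha)
  intro x hx y hy
  obtain ⟨a, ha, b, hb, rfl⟩ := Submodule.mem_sup.1 hx
  obtain ⟨c, hc, d, hd, rfl⟩ := Submodule.mem_sup.1 hy
  obtain ⟨β, rfl⟩ := Submodule.mem_span_singleton.1 hb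
  obtain ⟨δ, rfl⟩ := Submodule.mem_span_singleton.1 hd
  simp [hA a ha c hc, hAv a ha, hvA c hc, halt v]

theorem TotallyIsotropic.two_mul_finrank_le [FiniteDimensional K V] (hnd : f.Nondegenerate)
    (hA : TotallyIsotropic f A) : 2 * finrank K A ≤ finrank K V := by
  have hle := Submodule.finrank_mono hA.le_orthogonal
  have hdim := LinearMap.BilinForm.finrank_orthogonal hnd A
  have := Submodule.finrank_le A
  lia

end TotallyIsotropic

section IsotropicCount

variable (K V) in
/-- The number of `m`-dimensional totally isotropic subspaces containing a given `a`-dimensional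
one, for a nondegenerate alternating form on `V` (see `ncard_C3`). The product is the solution of
the recurrence `isotropicCount_mul_sub`; it agrees with `Nprime` where `a ≤ m ≤ ν`. -/
def isotropicCount (m a : ℕ) : ℚ :=
  if m < a then 0 else
    ∏ i ∈ Ico a m, ((Nat.card K : ℚ) ^ (finrank K V - i) - Nat.card K ^ i) /
      ((Nat.card K : ℚ) ^ m - Nat.card K ^ i)

theorem isotropicCount_of_lt {m a : ℕ} (h : m < a) : isotropicCount K V m a = 0 := if_pos h

theorem isotropicCount_self (m : ℕ) : isotropicCount K V m m = 1 := by simp [isotropicCount]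

variable [Finite K]

theorem one_lt_natCard_cast : (1 : ℚ) < Nat.card K := by
  exact_mod_cast Finite.one_lt_card (α := K)

theorem isotropicCount_mul_sub {m a : ℕ} (h : a < m) :
    isotropicCount K V m a * ((Nat.card K : ℚ) ^ m - Nat.card K ^ a) =
      ((Nat.card K : ℚ) ^ (finrank K V - a) - Nat.card K ^ a) * isotropicCount K V m (a + 1) := by
  have hne : (Nat.card K : ℚ) ^ m - Nat.card K ^ a ≠ 0 :=
    (sub_pos.2 (pow_lt_pow_right₀ one_lt_natCard_cast h)).ne'
  rw [isotropicCount, isotropicCount, if_neg (by lia), if_neg (by lia),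
    Finset.prod_eq_prod_Ico_succ_bot h, mul_right_comm, div_mul_cancel₀ _ hne]

theorem isotropicCount_pos {m a : ℕ} (h : a ≤ m) (hm : 2 * m ≤ finrank K V) :
    0 < isotropicCount K V m a := by
  rw [isotropicCount, if_neg (by lia)]
  refine Finset.prod_pos fun i hi => ?_
  have him := (mem_Ico.1 hi).2
  exact div_pos (sub_pos.2 (pow_lt_pow_right₀ one_lt_natCard_cast (by lia)))
    (sub_pos.2 (pow_lt_pow_right₀ one_lt_natCard_cast him))

theorem isotropicCount_nonneg {m : ℕ} (hm : 2 * m ≤ finrank K V) (a : ℕ) :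
    0 ≤ isotropicCount K V m a := by
  rcases le_or_gt a m with h | h
  · exact (isotropicCount_pos h hm).le
  · exact (isotropicCount_of_lt h).ge

theorem pow_mul_isotropicCount_succ_le {m a e : ℕ} (hm : 2 * m ≤ finrank K V)
    (he : a < m → e + m + a ≤ finrank K V) :
    (Nat.card K : ℚ) ^ e * isotropicCount K V m (a + 1) ≤ isotropicCount K V m a := by
  rcases le_or_gt m a with hma | ham
  · rw [isotropicCount_of_lt (by lia), mul_zero]
    exact isotropicCount_nonneg hm a
  set q : ℚ := (Nat.card K : ℚ)
  have hq : 1 < q := one_lt_natCard_cast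
  have hpos : 0 < q ^ m - q ^ a := sub_pos.2 (pow_lt_pow_right₀ hq ham)
  have hratio : q ^ e * (q ^ m - q ^ a) ≤ q ^ (finrank K V - a) - q ^ a := by
    have hlead : q ^ (e + m) ≤ q ^ (finrank K V - a) :=
      pow_le_pow_right₀ hq.le (by have := he ham; lia)
    have htail : q ^ a ≤ q ^ (e + a) := pow_le_pow_right₀ hq.le (by lia)
    rw [mul_sub, ← pow_add, ← pow_add]
    linarith
  refine le_of_mul_le_mul_right ?_ hpos
  calc q ^ e * isotropicCount K V m (a + 1) * (q ^ m - q ^ a)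
      = q ^ e * (q ^ m - q ^ a) * isotropicCount K V m (a + 1) := by ring
    _ ≤ (q ^ (finrank K V - a) - q ^ a) * isotropicCount K V m (a + 1) :=
        mul_le_mul_of_nonneg_right hratio (isotropicCount_nonneg hm _)
    _ = isotropicCount K V m a * (q ^ m - q ^ a) := (isotropicCount_mul_sub ham).symm

theorem pow_mul_isotropicCount_add_le {m a e : ℕ} (hm : 2 * m ≤ finrank K V) (j : ℕ)
    (he : ∀ b < a + j, b < m → e + m + b ≤ finrank K V) :
    (Nat.card K : ℚ) ^ (e * j) * isotropicCount K V m (a + j) ≤ isotropicCount K V m a := by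
  induction j with
  | zero => simp
  | succ j ih =>
    calc (Nat.card K : ℚ) ^ (e * (j + 1)) * isotropicCount K V m (a + (j + 1))
        = (Nat.card K : ℚ) ^ (e * j) *
            ((Nat.card K : ℚ) ^ e * isotropicCount K V m (a + j + 1)) := by
          rw [mul_add_one, pow_add, mul_assoc, add_assoc]
      _ ≤ (Nat.card K : ℚ) ^ (e * j) * isotropicCount K V m (a + j) := by
          gcongr
          exact pow_mul_isotropicCount_succ_le hm (he (a + j) (by lia))
      _ ≤ isotropicCount K V m a := ih fun b hb => he b (by lia)

end IsotropicCount

section Counting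

variable {f : V →ₗ[K] V →ₗ[K] K} {A : Submodule K V} {m : ℕ}

theorem C3_sup_span_singleton (A : Submodule K V) (v : V) (m : ℕ) :
    C3 f (A ⊔ K ∙ v) m = {F ∈ C3 f A m | v ∈ F} := by
  ext F
  simp only [C3, Set.mem_ofPred_eq, sup_le_iff, Submodule.span_singleton_le_iff_mem, and_assoc]

theorem orthogonal_sdiff_inter_of_mem_C3 {F : Submodule K V} (hF : F ∈ C3 f A m) :
    {v ∈ (LinearMap.BilinForm.orthogonal f A : Set V) \ A | v ∈ F} = (F : Set V) \ A := by
  obtain ⟨⟨hFti, -⟩, hAF⟩ := hF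
  have hFA : F ≤ LinearMap.BilinForm.orthogonal f A :=
    hFti.le_orthogonal.trans (LinearMap.BilinForm.orthogonal_le hAF)
  ext v
  exact ⟨fun hv => ⟨hv.2, hv.1.2⟩, fun hv => ⟨⟨hFA hv.1, hv.2⟩, hv.1⟩⟩

variable [Finite V]

theorem ncard_C3_mul_sub (hnd : f.Nondegenerate) (hA : TotallyIsotropic f A) {N : ℚ}
    (hN : ∀ v ∈ LinearMap.BilinForm.orthogonal f A, v ∉ A → (C3 f (A ⊔ K ∙ v) m).ncard = N) :
    (C3 f A m).ncard * ((Nat.card K : ℚ) ^ m - Nat.card K ^ finrank K A) =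
      ((Nat.card K : ℚ) ^ (finrank K V - finrank K A) - Nat.card K ^ finrank K A) * N := by
  rw [← LinearMap.BilinForm.finrank_orthogonal hnd A, ← ncard_submodule_sdiff hA.le_orthogonal]
  refine ncard_mul_eq_ncard_mul (fun F v => v ∈ F) (fun F hF => ?_) fun v hv => ?_
  · rw [orthogonal_sdiff_inter_of_mem_C3 hF, ncard_submodule_sdiff hF.2, hF.1.2]
  · rw [← C3_sup_span_singleton]
    exact hN v hv.1 hv.2

theorem C3_eq_empty_of_lt (h : m < finrank K A) : C3 f A m = ∅ := by
  refine Set.eq_empty_of_forall_notMem fun F hF => ?_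
  have := Submodule.finrank_mono hF.2
  have := hF.1.2
  lia

theorem C3_finrank_eq_singleton (hA : TotallyIsotropic f A) : C3 f A (finrank K A) = {A} := by
  ext F
  refine ⟨fun hF => (Submodule.eq_of_le_of_finrank_eq hF.2 hF.1.2.symm).symm, ?_⟩
  rintro rfl
  exact ⟨⟨hA, rfl⟩, le_rfl⟩

variable [Finite K]

theorem ncard_C3 (halt : f.IsAlt) (hnd : f.Nondegenerate) {A : Submodule K V}
    (hA : TotallyIsotropic f A) : ((C3 f A m).ncard : ℚ) = isotropicCount K V m (finrank K A) := by
  rcases lt_trichotomy m (finrank K A) with h | rfl | h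
  · rw [C3_eq_empty_of_lt h, isotropicCount_of_lt h, Set.ncard_empty, Nat.cast_zero]
  · rw [C3_finrank_eq_singleton hA, isotropicCount_self, Set.ncard_singleton, Nat.cast_one]
  · have hne : (Nat.card K : ℚ) ^ m - Nat.card K ^ finrank K A ≠ 0 :=
      (sub_pos.2 (pow_lt_pow_right₀ one_lt_natCard_cast h)).ne'
    refine mul_right_cancel₀ hne ?_
    rw [isotropicCount_mul_sub h]
    refine ncard_C3_mul_sub hnd hA fun v hv hvA => ?_
    have hdim := Submodule.finrank_sup_span_singleton (K := K) hvA
    rw [ncard_C3 halt hnd (hA.sup_span_singleton halt hv), hdim]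
termination_by m - finrank K A

theorem ncard_superspaces_le_isotropicCount (halt : f.IsAlt) (hnd : f.Nondegenerate)
    (hm : 2 * m ≤ finrank K V) {ℱ : Set (Submodule K V)} (hℱ : ℱ ⊆ polar f m)
    (S : Submodule K V) :
    ({F ∈ ℱ | S ≤ F}.ncard : ℚ) ≤ isotropicCount K V m (finrank K S) := by
  by_cases hS : TotallyIsotropic f S
  · rw [← ncard_C3 halt hnd hS]
    have hsub : {F ∈ ℱ | S ≤ F} ⊆ C3 f S m := fun F hF => ⟨hℱ hF.1, hF.2⟩
    exact_mod_cast Set.ncard_le_ncard hsub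
  · have hempty : {F ∈ ℱ | S ≤ F} = ∅ :=
      Set.eq_empty_of_forall_notMem fun F hF => hS ((hℱ hF.1).1.mono hF.2)
    rw [hempty, Set.ncard_empty, Nat.cast_zero]
    exact isotropicCount_nonneg hm _

end Counting

section Covers

variable {f : V →ₗ[K] V →ₗ[K] K} {m t : ℕ} {ℱ ℋ : Set (Submodule K V)} {X S : Submodule K V}

/-- The families `ℱ` and `ℋ` are cross `t`-intersecting. -/
def CrossIntersecting (t : ℕ) (ℱ ℋ : Set (Submodule K V)) : Prop :=
  ∀ F ∈ ℱ, ∀ H ∈ ℋ, t ≤ finrank K ↥(F ⊓ H)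

/-- The pair of families `ℱ`, `ℋ` is trivial: a single `t`-dimensional totally isotropic subspace
lies in every member of both. -/
def TrivialPair (f : V →ₗ[K] V →ₗ[K] K) (t : ℕ) (ℱ ℋ : Set (Submodule K V)) : Prop :=
  ∃ T ∈ polar f t, (∀ F ∈ ℱ, T ≤ F) ∧ ∀ H ∈ ℋ, T ≤ H

theorem CrossIntersecting.symm (h : CrossIntersecting t ℱ ℋ) : CrossIntersecting t ℋ ℱ :=
  fun H hH F hF => inf_comm F H ▸ h F hF H hH

theorem TrivialPair.symm (h : TrivialPair f t ℱ ℋ) : TrivialPair f t ℋ ℱ :=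
  let ⟨T, hT, hℱ, hℋ⟩ := h
  ⟨T, hT, hℋ, hℱ⟩

theorem CrossIntersecting.isTCover (h : CrossIntersecting t ℱ ℋ) (hℱ : ℱ ⊆ polar f m)
    (hX : X ∈ ℱ) : IsTCover f t ℋ X :=
  ⟨(hℱ hX).1, h X hX⟩

theorem IsTCover.tauCover_le (hX : IsTCover f t ℱ X) : tauCover f t ℱ ≤ finrank K X :=
  Nat.sInf_le ⟨X, hX, rfl⟩

theorem IsTCover.exists_finrank_eq_tauCover (hX : IsTCover f t ℱ X) :
    ∃ Y, IsTCover f t ℱ Y ∧ finrank K Y = tauCover f t ℱ :=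
  Nat.sInf_mem (s := {x | ∃ Y, IsTCover f t ℱ Y ∧ finrank K ↥Y = x}) ⟨_, X, hX, rfl⟩

theorem exists_finrank_inf_lt_of_lt_tauCover (hS : TotallyIsotropic f S)
    (h : finrank K S < tauCover f t ℱ) : ∃ F ∈ ℱ, finrank K ↥(S ⊓ F) < t := by
  by_contra! hcover
  exact h.not_ge (IsTCover.tauCover_le ⟨hS, hcover⟩)

theorem IsTCover.le_finrank [FiniteDimensional K V] (hX : IsTCover f t ℱ X) (hne : ℱ.Nonempty) :
    t ≤ finrank K X := by
  obtain ⟨F, hF⟩ := hne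
  exact (hX.2 F hF).trans (Submodule.finrank_mono inf_le_left)

end Covers

section UpperBounds

variable [Finite K] [Finite V] {f : V →ₗ[K] V →ₗ[K] K} {m m' t : ℕ} {ℱ ℋ : Set (Submodule K V)}

theorem ncard_superspaces_le_of_add_le_tauCover (halt : f.IsAlt) (hnd : f.Nondegenerate)
    (hm : 2 * m ≤ finrank K V) (hℱ : ℱ ⊆ polar f m) (hℋ : ℋ ⊆ polar f m')
    (hcross : CrossIntersecting t ℱ ℋ) (j : ℕ) {S : Submodule K V}
    (hS : finrank K S + j ≤ tauCover f t ℋ) :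
    ({F ∈ ℱ | S ≤ F}.ncard : ℚ) ≤
      (Nat.card K : ℚ) ^ ((m' + 1 - t) * j) * isotropicCount K V m (finrank K S + j) := by
  induction j generalizing S with
  | zero => simpa using ncard_superspaces_le_isotropicCount halt hnd hm hℱ S
  | succ j ih =>
    have hB := mul_nonneg (a := (Nat.card K : ℚ) ^ ((m' + 1 - t) * j)) (by positivity)
      (isotropicCount_nonneg (K := K) (V := V) hm (finrank K S + (j + 1)))
    by_cases hSti : TotallyIsotropic f S
    · obtain ⟨H, hH, hSH⟩ := exists_finrank_inf_lt_of_lt_tauCover hSti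
        (show finrank K S < tauCover f t ℋ by lia)
      rw [mul_add_one, add_comm (_ * j), pow_add, mul_assoc, ← (hℋ hH).2]
      refine ncard_superspaces_le_pow_mul ((hℋ hH).2.symm ▸ hB) hSH
        (fun F hF => hcross F hF H hH) fun S' hS' => ?_
      have := ih (S := S') (by lia)
      rwa [hS', add_assoc, add_comm 1 j, ← (hℋ hH).2] at this
    · have hempty : {F ∈ ℱ | S ≤ F} = ∅ :=
        Set.eq_empty_of_forall_notMem fun F hF => hSti ((hℱ hF.1).1.mono hF.2)
      rw [hempty, Set.ncard_empty, Nat.cast_zero]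
      exact mul_nonneg (by positivity) (isotropicCount_nonneg hm _)

theorem ncard_le_of_isTCover_of_add_le_tauCover (halt : f.IsAlt) (hnd : f.Nondegenerate)
    (hm : 2 * m ≤ finrank K V) (hℱ : ℱ ⊆ polar f m) (hℋ : ℋ ⊆ polar f m')
    (hcross : CrossIntersecting t ℱ ℋ) {x y : ℕ} {X : Submodule K V} (hX : IsTCover f t ℱ X)
    (hx : finrank K X = t + x) (hy : t + y ≤ tauCover f t ℋ) :
    (ℱ.ncard : ℚ) ≤ (Nat.card K : ℚ) ^ ((t + 1) * x) *
      ((Nat.card K : ℚ) ^ ((m' + 1 - t) * y) * isotropicCount K V m (t + y)) := by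
  have hall : {F ∈ ℱ | t ≤ finrank K ↥(X ⊓ F)} = ℱ := Set.sep_eq_self_iff_mem_true.2 hX.2
  rw [← hall]
  refine ncard_finrank_inf_ge_le_pow_mul
    (mul_nonneg (by positivity) (isotropicCount_nonneg hm _)) ?_ x hx
  rintro S rfl
  exact ncard_superspaces_le_of_add_le_tauCover halt hnd hm hℱ hℋ hcross y hy

theorem ncard_le_of_not_trivialPair (halt : f.IsAlt) (hnd : f.Nondegenerate)
    (hm : 2 * m ≤ finrank K V) (hℱ : ℱ ⊆ polar f m) (hℋ : ℋ ⊆ polar f m')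
    (hcross : CrossIntersecting t ℱ ℋ) (hnt : ¬ TrivialPair f t ℱ ℋ) {T : Submodule K V}
    (hT : IsTCover f t ℱ T) (hTt : finrank K T = t) :
    (ℱ.ncard : ℚ) ≤ (Nat.card K : ℚ) ^ (m' + 1 - t) * isotropicCount K V m (t + 1) := by
  have hTF : ∀ F ∈ ℱ, T ≤ F := fun F hF => le_of_finrank_le_finrank_inf (hTt.trans_le (hT.2 F hF))
  obtain ⟨H, hH, hTH⟩ : ∃ H ∈ ℋ, ¬ T ≤ H := by
    by_contra! hall
    exact hnt ⟨T, ⟨hT.1, hTt⟩, hTF, hall⟩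
  have hTH' : finrank K ↥(T ⊓ H) < t := by
    by_contra! hle
    exact hTH (le_of_finrank_le_finrank_inf (hTt.trans_le hle))
  rw [← Set.sep_eq_self_iff_mem_true.2 hTF, ← (hℋ hH).2]
  refine ncard_superspaces_le_pow_mul (isotropicCount_nonneg hm _) hTH'
    (fun F hF => hcross F hF H hH) fun S hS => ?_
  rw [← hTt, ← hS]
  exact ncard_superspaces_le_isotropicCount halt hnd hm hℱ S

end UpperBounds

section LowerBound

variable [Finite V] {f : V →ₗ[K] V →ₗ[K] K} {M T : Submodule K V} {m : ℕ}

theorem C3_sdiff_C1_subset (hTM : T ≤ M) {v : V} (hvM : v ∈ M) (hvT : v ∉ T) :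
    C3 f (T ⊔ K ∙ v) m \ C1 f M (T ⊔ K ∙ v) m (finrank K T + 1) ⊆
      {F ∈ {F ∈ C1 f M T m (finrank K T) | finrank K ↥(F ⊓ M) = finrank K T + 1} | v ∈ F} := by
  rintro F ⟨⟨hF, hTvF⟩, hFC1⟩
  have hvM' : T ⊔ K ∙ v ≤ M := sup_le hTM ((Submodule.span_singleton_le_iff_mem v M).2 hvM)
  have hge : finrank K T + 1 ≤ finrank K ↥(F ⊓ M) :=
    (Submodule.finrank_sup_span_singleton (K := K) hvT).ge.trans
      (Submodule.finrank_mono (le_inf hTvF hvM'))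
  have hlt : finrank K ↥(F ⊓ M) < finrank K T + 1 + 1 := by
    by_contra! hle
    exact hFC1 ⟨hF, hTvF, hle⟩
  exact ⟨⟨⟨hF, le_sup_left.trans hTvF, hge⟩, by lia⟩,
    hTvF (Submodule.mem_sup_right (Submodule.mem_span_singleton_self v))⟩

variable [Finite K]

theorem ncard_C1_le (halt : f.IsAlt) (hnd : f.Nondegenerate) (hm : 2 * m ≤ finrank K V)
    (M A : Submodule K V) :
    ((C1 f M A m (finrank K A)).ncard : ℚ) ≤
      (Nat.card K : ℚ) ^ (finrank K M - finrank K A) * isotropicCount K V m (finrank K A + 1) := by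
  have hC1 : C1 f M A m (finrank K A) =
      {F ∈ {F ∈ polar f m | finrank K A + 1 ≤ finrank K ↥(F ⊓ M)} | A ≤ F} := by
    ext F
    simp only [C1, Set.mem_ofPred_eq]
    tauto
  rw [hC1, ← Nat.add_sub_add_right _ 1]
  refine ncard_superspaces_le_pow_mul (isotropicCount_nonneg hm _)
    (Nat.lt_succ_of_le (Submodule.finrank_mono inf_le_left)) (fun F hF => hF.2) fun S hS => ?_
  rw [← hS]
  exact ncard_superspaces_le_isotropicCount halt hnd hm (Set.sep_subset _ _) S

theorem isotropicCount_sub_le_ncard_C1_mem (halt : f.IsAlt) (hnd : f.Nondegenerate)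
    (hm : 2 * m ≤ finrank K V) (hM : TotallyIsotropic f M) (hTM : T ≤ M) {v : V} (hvM : v ∈ M)
    (hvT : v ∉ T) :
    isotropicCount K V m (finrank K T + 1) -
        (Nat.card K : ℚ) ^ (finrank K M - (finrank K T + 1)) *
          isotropicCount K V m (finrank K T + 2) ≤
      {F ∈ {F ∈ C1 f M T m (finrank K T) | finrank K ↥(F ⊓ M) = finrank K T + 1} |
        v ∈ F}.ncard := by
  have hTvM : T ⊔ K ∙ v ≤ M := sup_le hTM ((Submodule.span_singleton_le_iff_mem v M).2 hvM)
  have hC3 := ncard_C3 (m := m) halt hnd (hM.mono hTvM)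
  have hC1 := ncard_C1_le halt hnd hm M (T ⊔ K ∙ v)
  rw [Submodule.finrank_sup_span_singleton hvT] at hC1 hC3
  have hsplit : ((C3 f (T ⊔ K ∙ v) m).ncard : ℚ) ≤
      (C3 f (T ⊔ K ∙ v) m \ C1 f M (T ⊔ K ∙ v) m (finrank K T + 1)).ncard +
        (C1 f M (T ⊔ K ∙ v) m (finrank K T + 1)).ncard :=
    mod_cast Set.ncard_le_ncard_sdiff_add_ncard _ _
  rw [← hC3]
  refine le_trans ?_ (Nat.cast_le.2 (Set.ncard_le_ncard (C3_sdiff_C1_subset hTM hvM hvT)))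
  linarith

-- Double counting of the pairs `(v, F)` with `v ∈ F`, where `v ∈ M \ T` and `F` is a member of
-- `C1 f M T m t` meeting `M` in dimension exactly `t + 1`.
theorem sub_mul_sub_le_ncard_C1_mul (halt : f.IsAlt) (hnd : f.Nondegenerate)
    (hm : 2 * m ≤ finrank K V) (hM : TotallyIsotropic f M) (hTM : T ≤ M) :
    ((Nat.card K : ℚ) ^ finrank K M - Nat.card K ^ finrank K T) *
        (isotropicCount K V m (finrank K T + 1) -
          (Nat.card K : ℚ) ^ (finrank K M - (finrank K T + 1)) *
            isotropicCount K V m (finrank K T + 2)) ≤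
      (C1 f M T m (finrank K T)).ncard *
        ((Nat.card K : ℚ) ^ (finrank K T + 1) - Nat.card K ^ finrank K T) := by
  rw [← ncard_submodule_sdiff hTM]
  set 𝒟 := {F ∈ C1 f M T m (finrank K T) | finrank K ↥(F ⊓ M) = finrank K T + 1}
  refine (ncard_mul_le_ncard_mul (t := 𝒟) (fun v F => v ∈ F)
    (b := (Nat.card K : ℚ) ^ (finrank K T + 1) - Nat.card K ^ finrank K T)
    (fun v hv => ?_) fun F hF => ?_).trans ?_
  · exact isotropicCount_sub_le_ncard_C1_mem halt hnd hm hM hTM hv.1 hv.2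
  · have hinter : {v ∈ (M : Set V) \ T | v ∈ F} = ((F ⊓ M : Submodule K V) : Set V) \ T := by
      ext v
      simp only [Set.mem_ofPred_eq, Set.mem_sdiff, Submodule.coe_inf, Set.mem_inter_iff,
        SetLike.mem_coe]
      tauto
    rw [hinter, ncard_submodule_sdiff (le_inf hF.1.2.1 hTM), hF.2]
  · gcongr
    · exact sub_nonneg.2 (pow_le_pow_right₀ one_lt_natCard_cast.le (Nat.le_succ _))
    · exact Set.toFinite _
    · exact Set.sep_subset _ _

theorem mul_lt_of_mul_sub_le {q r N δ c : ℚ} (hq : 2 ≤ q) (hr : 2 ≤ r) (hN : 0 < N)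
    (hδ : 0 ≤ δ) (hδN : q ^ 3 * δ ≤ N) (h : (q * r - 1) * (N - δ) ≤ (q - 1) * c) : r * N < c := by
  have hqδ : 4 * (q * δ) ≤ N :=
    calc 4 * (q * δ) = 2 ^ 2 * (q * δ) := by norm_num
      _ ≤ q ^ 2 * (q * δ) := by gcongr
      _ = q ^ 3 * δ := by ring
      _ ≤ N := hδN
  have hqr : q * r * δ ≤ r * N / 4 := by nlinarith
  have hrN : N ≤ r * N / 2 := by nlinarith
  refine lt_of_mul_lt_mul_left (a := q - 1) ?_ (by linarith)
  nlinarith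

theorem pow_mul_isotropicCount_lt_ncard_C1 (halt : f.IsAlt) (hnd : f.Nondegenerate)
    (hM : TotallyIsotropic f M) (hTM : T ≤ M) {k : ℕ} (hk : k ≠ 0)
    (hMT : finrank K M = finrank K T + (k + 1)) (hTm : finrank K T + 1 ≤ m)
    (hm : 2 * m ≤ finrank K V) (hdim : finrank K M + m + 3 ≤ finrank K V) :
    (Nat.card K : ℚ) ^ k * isotropicCount K V m (finrank K T + 1) <
      (C1 f M T m (finrank K T)).ncard := by
  have hq : (2 : ℚ) ≤ Nat.card K := by exact_mod_cast Finite.one_lt_card (α := K)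
  have hcount := sub_mul_sub_le_ncard_C1_mul (m := m) halt hnd hm hM hTM
  have hdecay := pow_mul_isotropicCount_succ_le (K := K) (V := V) (m := m)
    (a := finrank K T + 1) (e := 3 + k) hm (by lia)
  rw [hMT, show finrank K T + (k + 1) - (finrank K T + 1) = k by lia] at hcount
  rw [pow_add, mul_assoc] at hdecay
  refine mul_lt_of_mul_sub_le hq (hq.trans (le_self_pow₀ (by linarith) hk))
    (isotropicCount_pos hTm hm)
    (mul_nonneg (by positivity) (isotropicCount_nonneg hm (finrank K T + 2))) hdecay ?_
  have hqT : (0 : ℚ) < (Nat.card K : ℚ) ^ finrank K T := by positivity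
  refine le_of_mul_le_mul_left ?_ hqT
  linear_combination hcount

theorem isotropicCount_le_ncard_C2 (halt : f.IsAlt) (hnd : f.Nondegenerate)
    (hT : TotallyIsotropic f T) (M : Submodule K V) :
    isotropicCount K V m (finrank K T) ≤ (C2 f M T m).ncard := by
  rw [← ncard_C3 halt hnd hT]
  exact_mod_cast Set.ncard_le_ncard (Set.subset_union_left : C3 f T m ⊆ C2 f M T m)

end LowerBound

section ProductBound

variable [Finite K] [Finite V] {f : V →ₗ[K] V →ₗ[K] K} {m₁ m₂ t : ℕ}
  {ℱ₁ ℱ₂ : Set (Submodule K V)}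

theorem ncard_mul_ncard_le_of_finrank_eq (halt : f.IsAlt) (hnd : f.Nondegenerate)
    (hm₁ : t ≤ m₁) (hm₂ : t ≤ m₂) (hdim : 2 * m₁ + m₂ + t + 3 ≤ finrank K V)
    (hm₂V : 2 * m₂ ≤ finrank K V) (h1 : ℱ₁ ⊆ polar f m₁) (h2 : ℱ₂ ⊆ polar f m₂)
    (hcross : CrossIntersecting t ℱ₁ ℱ₂) (hnt : ¬ TrivialPair f t ℱ₁ ℱ₂) {T₁ T₂ : Submodule K V}
    (hT₁ : IsTCover f t ℱ₁ T₁) (hT₁t : finrank K T₁ = t)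
    (hT₂ : IsTCover f t ℱ₂ T₂) (hT₂t : finrank K T₂ = t) :
    (ℱ₁.ncard : ℚ) * ℱ₂.ncard ≤
      (Nat.card K : ℚ) ^ (m₂ - t) * isotropicCount K V m₁ (t + 1) * isotropicCount K V m₂ t := by
  have hm₁V : 2 * m₁ ≤ finrank K V := by lia
  have hN₁ := isotropicCount_nonneg hm₁V (t + 1)
  have hdecay := pow_mul_isotropicCount_succ_le (a := t) (e := m₁ - t + 2) hm₂V (by lia)
  calc (ℱ₁.ncard : ℚ) * ℱ₂.ncard
      ≤ ((Nat.card K : ℚ) ^ (m₂ + 1 - t) * isotropicCount K V m₁ (t + 1)) *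
          ((Nat.card K : ℚ) ^ (m₁ + 1 - t) * isotropicCount K V m₂ (t + 1)) :=
        mul_le_mul (ncard_le_of_not_trivialPair halt hnd hm₁V h1 h2 hcross hnt hT₁ hT₁t)
          (ncard_le_of_not_trivialPair halt hnd hm₂V h2 h1 hcross.symm (fun h => hnt h.symm)
            hT₂ hT₂t)
          (by positivity) (by positivity)
    _ = (Nat.card K : ℚ) ^ (m₂ - t) * isotropicCount K V m₁ (t + 1) *
          ((Nat.card K : ℚ) ^ (m₁ - t + 2) * isotropicCount K V m₂ (t + 1)) := by
        rw [show m₂ + 1 - t = m₂ - t + 1 by lia, show m₁ + 1 - t = m₁ - t + 1 by lia]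
        ring
    _ ≤ _ := by gcongr

theorem cover_exponent_le {x z : ℕ} (hm₁ : t ≤ m₁) (hm₂ : t ≤ m₂) (hxz : 1 ≤ x + z) :
    (t + 1) * x + (m₂ + 1 - t) * (z + 1) + ((t + 1) * (z + 1) + (m₁ + 1 - t) * x) ≤
      (m₂ - t) + (m₂ + t + 4) * z + (m₁ + t + 4) * x := by
  obtain ⟨d₁, rfl⟩ := Nat.exists_eq_add_of_le hm₁
  obtain ⟨d₂, rfl⟩ := Nat.exists_eq_add_of_le hm₂
  rw [add_assoc t, add_assoc t, Nat.add_sub_cancel_left, Nat.add_sub_cancel_left,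
    Nat.add_sub_cancel_left]
  nlinarith [Nat.mul_le_mul_left (t + 2) hxz]

theorem ncard_mul_ncard_le_of_add_le_tauCover (halt : f.IsAlt) (hnd : f.Nondegenerate)
    (hm₂ : t ≤ m₂) (hdim : 2 * m₁ + m₂ + t + 3 ≤ finrank K V)
    (hm₂V : 2 * m₂ ≤ finrank K V) (h1 : ℱ₁ ⊆ polar f m₁) (h2 : ℱ₂ ⊆ polar f m₂)
    (hcross : CrossIntersecting t ℱ₁ ℱ₂) {x z : ℕ} (hxz : 1 ≤ x + z) (hxm₁ : t + x ≤ m₁)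
    {X₁ X₂ : Submodule K V} (hX₁ : IsTCover f t ℱ₁ X₁) (hx : finrank K X₁ = t + x)
    (hx' : t + x ≤ tauCover f t ℱ₁) (hX₂ : IsTCover f t ℱ₂ X₂) (hz : finrank K X₂ = t + (z + 1))
    (hz' : t + (z + 1) ≤ tauCover f t ℱ₂) :
    (ℱ₁.ncard : ℚ) * ℱ₂.ncard ≤
      (Nat.card K : ℚ) ^ (m₂ - t) * isotropicCount K V m₁ (t + 1) * isotropicCount K V m₂ t := by
  have hm₁V : 2 * m₁ ≤ finrank K V := by lia
  have hcard₁ := ncard_le_of_isTCover_of_add_le_tauCover halt hnd hm₁V h1 h2 hcross hX₁ hx hz'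
  have hcard₂ := ncard_le_of_isTCover_of_add_le_tauCover halt hnd hm₂V h2 h1 hcross.symm hX₂ hz hx'
  have hdecay₁ := pow_mul_isotropicCount_add_le (a := t + 1) (e := m₂ + t + 4) hm₁V z (by lia)
  have hdecay₂ := pow_mul_isotropicCount_add_le (a := t) (e := m₁ + t + 4) hm₂V x (by lia)
  rw [add_assoc t, add_comm 1 z] at hdecay₁
  set q : ℚ := (Nat.card K : ℚ)
  set N₁ := isotropicCount K V m₁ (t + (z + 1))
  set N₂ := isotropicCount K V m₂ (t + x)
  have hq : 1 ≤ q := one_lt_natCard_cast.le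
  have hN₁ : 0 ≤ N₁ := isotropicCount_nonneg hm₁V _
  have hN₂ : 0 ≤ N₂ := isotropicCount_nonneg hm₂V _
  calc (ℱ₁.ncard : ℚ) * ℱ₂.ncard
      ≤ q ^ ((t + 1) * x) * (q ^ ((m₂ + 1 - t) * (z + 1)) * N₁) *
          (q ^ ((t + 1) * (z + 1)) * (q ^ ((m₁ + 1 - t) * x) * N₂)) := by gcongr
    _ = q ^ ((t + 1) * x + (m₂ + 1 - t) * (z + 1) + ((t + 1) * (z + 1) + (m₁ + 1 - t) * x)) *
          (N₁ * N₂) := by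
        simp only [pow_add]
        ring
    _ ≤ q ^ ((m₂ - t) + (m₂ + t + 4) * z + (m₁ + t + 4) * x) * (N₁ * N₂) := by
        gcongr ?_ * _
        exact pow_le_pow_right₀ hq (cover_exponent_le (by lia) hm₂ hxz)
    _ = q ^ (m₂ - t) * (q ^ ((m₂ + t + 4) * z) * N₁) * (q ^ ((m₁ + t + 4) * x) * N₂) := by
        rw [pow_add, pow_add]
        ring
    _ ≤ q ^ (m₂ - t) * isotropicCount K V m₁ (t + 1) * isotropicCount K V m₂ t := by
        gcongr
        exact mul_nonneg (by positivity) (isotropicCount_nonneg hm₁V _)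

theorem ncard_mul_ncard_le (halt : f.IsAlt) (hnd : f.Nondegenerate)
    (hdim : 2 * m₁ + m₂ + t + 3 ≤ finrank K V) (h1ne : ℱ₁.Nonempty) (h2ne : ℱ₂.Nonempty)
    (h1 : ℱ₁ ⊆ polar f m₁) (h2 : ℱ₂ ⊆ polar f m₂) (hcross : CrossIntersecting t ℱ₁ ℱ₂)
    (hnt : ¬ TrivialPair f t ℱ₁ ℱ₂) (htau : tauCover f t ℱ₁ ≤ tauCover f t ℱ₂)
    (htau' : (tauCover f t ℱ₁, tauCover f t ℱ₂) ≠ (t, t + 1)) :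
    (ℱ₁.ncard : ℚ) * ℱ₂.ncard ≤
      (Nat.card K : ℚ) ^ (m₂ - t) * isotropicCount K V m₁ (t + 1) * isotropicCount K V m₂ t := by
  obtain ⟨F₁, hF₁⟩ := h1ne
  obtain ⟨F₂, hF₂⟩ := h2ne
  have hm₂V : 2 * m₂ ≤ finrank K V := (h2 hF₂).2 ▸ (h2 hF₂).1.two_mul_finrank_le hnd
  have hF₁cover := hcross.isTCover h1 hF₁
  have hF₂cover := hcross.symm.isTCover h2 hF₂
  have hτm₁ : tauCover f t ℱ₂ ≤ m₁ := hF₁cover.tauCover_le.trans_eq (h1 hF₁).2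
  have hτm₂ : tauCover f t ℱ₁ ≤ m₂ := hF₂cover.tauCover_le.trans_eq (h2 hF₂).2
  obtain ⟨X₁, hX₁, hX₁τ⟩ := hF₂cover.exists_finrank_eq_tauCover
  obtain ⟨X₂, hX₂, hX₂τ⟩ := hF₁cover.exists_finrank_eq_tauCover
  obtain ⟨x, hx⟩ := Nat.exists_eq_add_of_le (hX₁.le_finrank ⟨F₁, hF₁⟩)
  obtain ⟨y, hy⟩ := Nat.exists_eq_add_of_le (hX₂.le_finrank ⟨F₂, hF₂⟩)
  rcases y with - | z
  · exact ncard_mul_ncard_le_of_finrank_eq halt hnd (by lia) (by lia) hdim hm₂V h1 h2 hcross hnt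
      hX₁ (by lia) hX₂ hy
  · have hxz : 1 ≤ x + z := by
      by_contra! hlt
      exact htau' (Prod.ext (show tauCover f t ℱ₁ = t by lia)
        (show tauCover f t ℱ₂ = t + 1 by lia))
    exact ncard_mul_ncard_le_of_add_le_tauCover halt hnd (by lia) hdim hm₂V h1 h2 hcross hxz
      (by lia) hX₁ hx (by lia) hX₂ hy (by lia)

end ProductBound

theorem stmt_18_general [Finite K] [Finite V] {f : V →ₗ[K] V →ₗ[K] K} (halt : f.IsAlt)
    (hnd : f.Nondegenerate) {m₁ m₂ t : ℕ} (hm₁ : t + 1 ≤ m₁) (hm₂ : t + 1 ≤ m₂)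
    (hdim : 2 * m₁ + m₂ + t + 3 ≤ finrank K V) {ℱ₁ ℱ₂ : Set (Submodule K V)}
    (h1ne : ℱ₁.Nonempty) (h2ne : ℱ₂.Nonempty) (h1 : ℱ₁ ⊆ polar f m₁) (h2 : ℱ₂ ⊆ polar f m₂)
    (hcross : CrossIntersecting t ℱ₁ ℱ₂) (hnt : ¬ TrivialPair f t ℱ₁ ℱ₂)
    (htau : tauCover f t ℱ₁ ≤ tauCover f t ℱ₂)
    (htau' : (tauCover f t ℱ₁, tauCover f t ℱ₂) ≠ (t, t + 1))
    {M T : Submodule K V} (hM : M ∈ polar f (m₂ + 1)) (hTM : T ≤ M) (hT : finrank K T = t) :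
    ℱ₁.ncard * ℱ₂.ncard < (C1 f M T m₁ t).ncard * (C2 f M T m₂).ncard := by
  obtain ⟨hMti, hMdim⟩ := hM
  have hm₂V : 2 * m₂ ≤ finrank K V := by
    have := hMti.two_mul_finrank_le hnd
    lia
  have hupper := ncard_mul_ncard_le halt hnd hdim h1ne h2ne h1 h2 hcross hnt htau htau'
  have hC1 := pow_mul_isotropicCount_lt_ncard_C1 (m := m₁) (k := m₂ - t) halt hnd hMti hTM
    (by lia) (by lia) (by lia) (by lia) (by lia)
  have hC2 := isotropicCount_le_ncard_C2 (m := m₂) halt hnd (hMti.mono hTM) M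
  rw [hT] at hC1 hC2
  have hN₂ : 0 < isotropicCount K V m₂ t := isotropicCount_pos (by lia) hm₂V
  have hlt : (ℱ₁.ncard : ℚ) * ℱ₂.ncard < (C1 f M T m₁ t).ncard * (C2 f M T m₂).ncard :=
    hupper.trans_lt (mul_lt_mul hC1 hC2 hN₂ (Nat.cast_nonneg _))
  exact_mod_cast hlt

theorem stmt_18
    (q ν m₁ m₂ t : ℕ) (hq : IsPrimePow q)
    {K : Type} [Field K] [Fintype K] (hK : Fintype.card K = q)
    (f : (Fin (2 * ν) → K) →ₗ[K] (Fin (2 * ν) → K) →ₗ[K] K)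
    (halt : ∀ v, f v v = 0)
    (hnd : ∀ v, (∀ w, f v w = 0) → v = 0)
    (hν : 0 < ν) (ht : 0 < t) (hm₁ : t + 1 ≤ m₁) (hm₂ : t + 1 ≤ m₂)
    (hdim : m₁ + m₂ + 1 + max (m₁ + t + 2) m₂ ≤ 2 * ν)
    (ℱ₁ ℱ₂ : Set (Submodule K (Fin (2 * ν) → K)))
    (h1ne : ℱ₁.Nonempty) (h2ne : ℱ₂.Nonempty)
    (h1 : ℱ₁ ⊆ polar f m₁) (h2 : ℱ₂ ⊆ polar f m₂)
    (hcross : ∀ F₁ ∈ ℱ₁, ∀ F₂ ∈ ℱ₂, t ≤ finrank K ↥(F₁ ⊓ F₂))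
    (hnt : ¬ ∃ T ∈ polar f t, (∀ F ∈ ℱ₁, T ≤ F) ∧ (∀ F ∈ ℱ₂, T ≤ F))
    (htau : tauCover f t ℱ₁ ≤ tauCover f t ℱ₂)
    (htau' : (tauCover f t ℱ₁, tauCover f t ℱ₂) ≠ (t, t + 1)) :
    ∀ M ∈ polar f (m₂ + 1), ∀ T : Submodule K (Fin (2 * ν) → K),
      T ≤ M → finrank K T = t →
      ℱ₁.ncard * ℱ₂.ncard < (C1 f M T m₁ t).ncard * (C2 f M T m₂).ncard := by
  have hf : f.IsAlt := halt
  have hnd' : f.Nondegenerate := hf.isRefl.nondegenerate_iff_separatingLeft.2 hnd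
  have hdim' : 2 * m₁ + m₂ + t + 3 ≤ finrank K (Fin (2 * ν) → K) := by
    rw [Module.finrank_fin_fun]
    lia
  exact fun M hM T hTM hT =>
    stmt_18_general hf hnd' hm₁ hm₂ hdim' h1ne h2ne h1 h2 hcross hnt htau htau' hM hTM hT

end
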